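/- arXiv:1407.4236 — 3 statements merged into one kernel-verified Lean document; each statement's English description precedes it below -/
import Mathlib

section
/- Let n be a positive integer and let (f, f̃, α, β) be a Jacobi-Lie bialgebra in structure-constant form on ℝ^n. Let A be an invertible real n×n matrix which is an automorphism of the Lie algebra with structure constants f, i.e. A_i^m f_{mn}^k A_j^n = f_{ij}^l A_l^k for all i,j,k (summation over repeated indices). Define f̃'^{ij}_n = (A^{-T})^i_k f̃^{kl}_m (A^{-T})^j_l (A^T)^m_n, α'^i = (A^{-T})^i_m α^m, and β'_i = A_i^m β_m. Then (f, f̃', α', β') is again a Jacobi-Lie bialgebra in structure-constant form on ℝ^n. -/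
/-- A "Jacobi-Lie bialgebra in structure-constant form" on ℝ^n:
`f i j k` encodes the structure constants `f_{ij}^k` of the Lie algebra `g`
(so `[X_i, X_j] = f_{ij}^k X_k`), `ft i j k` encodes the structure constants
`f̃^{ij}_k` of the dual Lie algebra `g*` (so `[X̃^i, X̃^j] = f̃^{ij}_k X̃^k`),
and `a`, `b` are the coefficient vectors of the 1-cocycles
`X₀ = a^i X_i ∈ g` and `φ₀ = b_j X̃^j ∈ g*`. -/
def IsJacobiLieBialgebra (n : ℕ) (f ft : Fin n → Fin n → Fin n → ℝ)
    (a b : Fin n → ℝ) : Prop :=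
  -- antisymmetry of f
  (∀ i j k, f i j k = - f j i k) ∧
  -- Jacobi identity for f
  (∀ i j m p, (∑ k, f i j k * f k m p) + (∑ k, f i k p * f m j k)
      + (∑ k, f j k p * f i m k) = 0) ∧
  -- antisymmetry of ft
  (∀ i j k, ft i j k = - ft j i k) ∧
  -- Jacobi identity for ft
  (∀ i j m p, (∑ k, ft i j k * ft k m p) + (∑ k, ft i m k * ft j k p)
      + (∑ k, ft j m k * ft k i p) = 0) ∧
  -- compatibility condition (i)
  (∀ i j m p,
      (∑ k, f i j k * ft m p k) - (∑ k, f i k m * ft k p j)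
      - (∑ k, f i k p * ft m k j) - (∑ k, f k j m * ft k p i)
      - (∑ k, f k j p * ft m k i)
      + b i * ft m p j - b j * ft m p i + a m * f i j p - a p * f i j m
      + ((∑ k, a k * f i k m) - a m * b i) * (if j = p then (1 : ℝ) else 0)
      - ((∑ k, a k * f j k m) - a m * b j) * (if i = p then (1 : ℝ) else 0)
      - ((∑ k, a k * f i k p) - a p * b i) * (if j = m then (1 : ℝ) else 0)
      + ((∑ k, a k * f j k p) - a p * b j) * (if i = m then (1 : ℝ) else 0) = 0) ∧
  -- condition (ii): α^i β_i = 0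
  ((∑ i, a i * b i) = 0) ∧
  -- condition (iii): α^n f_{ni}^m − β_n f̃^{nm}_i = 0
  (∀ i m, (∑ k, a k * f k i m) - (∑ k, b k * ft k m i) = 0) ∧
  -- condition (iv): α^i f̃^{mn}_i = 0
  (∀ m p, (∑ i, a i * ft m p i) = 0) ∧
  -- condition (v): β_i f_{mn}^i = 0
  (∀ m p, (∑ i, b i * f m p i) = 0)

open Module

/-! The conditions on `(f, f̃, α, β)` are the component form of basis-free conditions on a
bracket of `V`, a bracket of its dual, a vector and a covector: a contraction over a repeated index
evaluates a linear map at an expansion in a basis or its dual basis, and a multilinear condition can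
be tested on a basis. So the conditions hold in one basis if and only if they hold in every basis.
The primed quantities are the components in the basis formed by the rows of `A`, and `A` being an
automorphism means that the structure constants `f` do not change. -/

section Contraction

variable {ι R V M : Type*} [Fintype ι] [CommRing R] [AddCommGroup V] [Module R V]
  [AddCommGroup M] [Module R M]

theorem sum_coord_smul_map (b : Basis ι R V) (L : V →ₗ[R] M) (v : V) :
    ∑ k, b.coord k v • L (b k) = L v := by
  simp only [← map_smul, ← map_sum, Basis.coord_apply, b.sum_repr]

theorem sum_apply_smul_map_coord (b : Basis ι R V) (L : Dual R V →ₗ[R] M) (ξ : Dual R V) :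
    ∑ k, ξ (b k) • L (b.coord k) = L ξ := by
  simp only [← map_smul, ← map_sum, b.sum_dual_apply_smul_coord]

end Contraction

section Multilinear

variable {R M : Type*} {ι₁ ι₂ ι₃ ι₄ V₁ V₂ V₃ V₄ : Type*} [CommRing R]
  [AddCommGroup M] [Module R M] [AddCommGroup V₁] [Module R V₁] [AddCommGroup V₂] [Module R V₂]
  [AddCommGroup V₃] [Module R V₃] [AddCommGroup V₄] [Module R V₄]
  (b₁ : Basis ι₁ R V₁) (b₂ : Basis ι₂ R V₂) (b₃ : Basis ι₃ R V₃) (b₄ : Basis ι₄ R V₄)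

theorem forall_eq_zero_iff_basis {φ : V₁ → M} (h₁ : IsLinearMap R φ) :
    (∀ x, φ x = 0) ↔ ∀ i, φ (b₁ i) = 0 :=
  ⟨fun h i => h (b₁ i), fun h => LinearMap.congr_fun (b₁.ext h : h₁.mk' φ = 0)⟩

theorem forall₂_eq_zero_iff_basis {φ : V₁ → V₂ → M}
    (h₁ : ∀ y, IsLinearMap R fun x => φ x y) (h₂ : ∀ x, IsLinearMap R fun y => φ x y) :
    (∀ x y, φ x y = 0) ↔ ∀ i j, φ (b₁ i) (b₂ j) = 0 :=
  ⟨fun h i j => h (b₁ i) (b₂ j), fun h x y => (forall_eq_zero_iff_basis b₁ (h₁ y)).2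
    (fun i => (forall_eq_zero_iff_basis b₂ (h₂ (b₁ i))).2 (h i) y) x⟩

theorem forall₃_eq_zero_iff_basis {φ : V₁ → V₂ → V₃ → M}
    (h₁ : ∀ y z, IsLinearMap R fun x => φ x y z) (h₂ : ∀ x z, IsLinearMap R fun y => φ x y z)
    (h₃ : ∀ x y, IsLinearMap R fun z => φ x y z) :
    (∀ x y z, φ x y z = 0) ↔ ∀ i j k, φ (b₁ i) (b₂ j) (b₃ k) = 0 :=
  ⟨fun h i j k => h (b₁ i) (b₂ j) (b₃ k), fun h x y z => (forall_eq_zero_iff_basis b₁ (h₁ y z)).2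
    (fun i => (forall₂_eq_zero_iff_basis b₂ b₃ (h₂ (b₁ i)) (h₃ (b₁ i))).2 (h i) y z) x⟩

theorem forall₄_eq_zero_iff_basis {φ : V₁ → V₂ → V₃ → V₄ → M}
    (h₁ : ∀ y z w, IsLinearMap R fun x => φ x y z w)
    (h₂ : ∀ x z w, IsLinearMap R fun y => φ x y z w)
    (h₃ : ∀ x y w, IsLinearMap R fun z => φ x y z w)
    (h₄ : ∀ x y z, IsLinearMap R fun w => φ x y z w) :
    (∀ x y z w, φ x y z w = 0) ↔ ∀ i j k l, φ (b₁ i) (b₂ j) (b₃ k) (b₄ l) = 0 :=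
  ⟨fun h i j k l => h (b₁ i) (b₂ j) (b₃ k) (b₄ l),
    fun h x y z w => (forall_eq_zero_iff_basis b₁ (h₁ y z w)).2
      (fun i => (forall₃_eq_zero_iff_basis b₂ b₃ b₄
        (h₂ (b₁ i)) (h₃ (b₁ i)) (h₄ (b₁ i))).2 (h i) y z w) x⟩

end Multilinear

section StructureConstants

variable {ι R V : Type*} [CommRing R] [AddCommGroup V] [Module R V]

/-- The structure constants `c_{ij}^k` of a bilinear bracket: `[b_i, b_j] = c_{ij}^k b_k`.
Applied to a bracket on `Dual R V` and a dual basis, this gives the constants `f̃^{ij}_k`. -/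
noncomputable def structureConstants (b : Basis ι R V) (br : V →ₗ[R] V →ₗ[R] V)
    (i j k : ι) : R :=
  b.coord k (br (b i) (b j))

theorem structureConstants_dualBasis [Finite ι] [DecidableEq ι] (b : Basis ι R V)
    (dbr : Dual R V →ₗ[R] Dual R V →ₗ[R] Dual R V) (i j k : ι) :
    structureConstants b.dualBasis dbr i j k = dbr (b.coord i) (b.coord j) (b k) := by
  simp only [structureConstants, Basis.coord_apply, Basis.dualBasis_repr, Basis.coe_dualBasis]

variable [Fintype ι]

theorem coord_bracket (b : Basis ι R V) (br : V →ₗ[R] V →ₗ[R] V) (x y : V) (k : ι) :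
    b.coord k (br x y) =
      ∑ i, ∑ j, b.coord i x * structureConstants b br i j k * b.coord j y := by
  rw [← sum_coord_smul_map b br x, LinearMap.sum_apply, map_sum]
  refine Finset.sum_congr rfl fun i _ => ?_
  rw [LinearMap.smul_apply, ← sum_coord_smul_map b (br (b i)) y, Finset.smul_sum, map_sum]
  refine Finset.sum_congr rfl fun j _ => ?_
  simp only [map_smul, smul_eq_mul, structureConstants]
  ring

theorem dual_bracket_apply [DecidableEq ι] (b : Basis ι R V)
    (dbr : Dual R V →ₗ[R] Dual R V →ₗ[R] Dual R V) (ξ η : Dual R V) (x : V) :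
    dbr ξ η x = ∑ i, ∑ j, ∑ k,
      ξ (b i) * structureConstants b.dualBasis dbr i j k * η (b j) * b.coord k x := by
  have expand (k : ι) := coord_bracket b.dualBasis dbr ξ η k
  simp only [Basis.coord_apply, Basis.dualBasis_repr] at expand
  simp only [← sum_coord_smul_map b (dbr ξ η) x, expand, smul_eq_mul, Finset.mul_sum]
  rw [← Finset.sum_comm_cycle]
  refine Finset.sum_congr rfl fun i _ => Finset.sum_congr rfl fun j _ =>
    Finset.sum_congr rfl fun k _ => mul_comm _ _

/-- The bilinear bracket with prescribed structure constants in a basis. -/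
noncomputable def bracketOfConstants (b : Basis ι R V) (c : ι → ι → ι → R) :
    V →ₗ[R] V →ₗ[R] V :=
  b.constr R fun i => b.constr R fun j => ∑ k, c i j k • b k

theorem structureConstants_bracketOfConstants (b : Basis ι R V) (c : ι → ι → ι → R) :
    structureConstants b (bracketOfConstants b c) = c := by
  classical
  funext i j k
  simp [structureConstants, bracketOfConstants, Finsupp.single_apply]

section DualContraction

variable [DecidableEq ι] (b : Basis ι R V) (dbr : Dual R V →ₗ[R] Dual R V →ₗ[R] Dual R V)

theorem sum_apply_mul_structureConstants_fst (ξ : Dual R V) (p j : ι) :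
    ∑ k, ξ (b k) * structureConstants b.dualBasis dbr k p j = dbr ξ (b.coord p) (b j) := by
  simp only [structureConstants_dualBasis]
  exact sum_apply_smul_map_coord b (Dual.eval R V (b j) ∘ₗ dbr.flip (b.coord p)) ξ

theorem sum_apply_mul_structureConstants_snd (ξ : Dual R V) (m j : ι) :
    ∑ k, ξ (b k) * structureConstants b.dualBasis dbr m k j = dbr (b.coord m) ξ (b j) := by
  simp only [structureConstants_dualBasis]
  exact sum_apply_smul_map_coord b (Dual.eval R V (b j) ∘ₗ dbr (b.coord m)) ξ

end DualContraction

end StructureConstants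

section LieBracket

variable {ι R V : Type*} [CommRing R] [AddCommGroup V] [Module R V]

/-- A bilinear map is a Lie bracket. Over `ℝ`, antisymmetry is the same as `[x, x] = 0`. -/
structure IsLieBracket (br : V →ₗ[R] V →ₗ[R] V) : Prop where
  antisymm : ∀ x y, br x y = -br y x
  jacobi : ∀ x y z, br (br x y) z + br x (br z y) + br y (br x z) = 0

theorem antisymm_iff_structureConstants (b : Basis ι R V) (br : V →ₗ[R] V →ₗ[R] V) :
    (∀ x y, br x y = -br y x) ↔
      ∀ i j k, structureConstants b br i j k = -structureConstants b br j i k := by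
  have bilin := forall₂_eq_zero_iff_basis b b (φ := fun x y => br x y + br y x)
    (fun y => (br.flip y + br y).isLinear) (fun x => (br x + br.flip x).isLinear)
  simp only [← eq_neg_iff_add_eq_zero] at bilin
  rw [bilin]
  simp only [structureConstants, b.ext_elem_iff, Basis.coord_apply, map_neg, Finsupp.neg_apply]

variable [Fintype ι]

theorem jacobi_iff_structureConstants (b : Basis ι R V) (br : V →ₗ[R] V →ₗ[R] V) :
    (∀ x y z, br (br x y) z + br x (br z y) + br y (br x z) = 0) ↔
      let c := structureConstants b br
      ∀ i j m p, (∑ k, c i j k * c k m p) + (∑ k, c i k p * c m j k)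
        + (∑ k, c j k p * c i m k) = 0 := by
  have trilin := forall₃_eq_zero_iff_basis b b b
    (φ := fun x y z => br (br x y) z + br x (br z y) + br y (br x z))
    (fun y z => (br.flip z ∘ₗ br.flip y + br.flip (br z y) + br y ∘ₗ br.flip z).isLinear)
    (fun x z => (br.flip z ∘ₗ br x + br x ∘ₗ br z + br.flip (br x z)).isLinear)
    (fun x y => (br (br x y) + br x ∘ₗ br.flip y + br y ∘ₗ br x).isLinear)
  have left (i j m p : ι) : ∑ k, structureConstants b br i j k * structureConstants b br k m p =
      b.coord p (br (br (b i) (b j)) (b m)) :=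
    sum_coord_smul_map b (b.coord p ∘ₗ br.flip (b m)) (br (b i) (b j))
  have right (i j m p : ι) : ∑ k, structureConstants b br i k p * structureConstants b br m j k =
      b.coord p (br (b i) (br (b m) (b j))) := by
    simp only [mul_comm (structureConstants b br i _ p)]
    exact sum_coord_smul_map b (b.coord p ∘ₗ br (b i)) (br (b m) (b j))
  rw [trilin]
  simp only [left, right, b.ext_elem_iff, Basis.coord_apply, map_add, map_zero,
    Finsupp.add_apply, Finsupp.zero_apply]

theorem jacobi_iff_structureConstants_cyclic (b : Basis ι R V) (br : V →ₗ[R] V →ₗ[R] V)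
    (antisymm : ∀ i j k, structureConstants b br i j k = -structureConstants b br j i k) :
    (∀ x y z, br (br x y) z + br x (br z y) + br y (br x z) = 0) ↔
      let c := structureConstants b br
      ∀ i j m p, (∑ k, c i j k * c k m p) + (∑ k, c i m k * c j k p)
        + (∑ k, c j m k * c k i p) = 0 := by
  set c := structureConstants b br
  have swap_both (i j m p : ι) : ∑ k, c i k p * c m j k = ∑ k, c j m k * c k i p :=
    Finset.sum_congr rfl fun k _ => by rw [antisymm i k p, antisymm m j k]; ring
  rw [jacobi_iff_structureConstants b]
  refine forall₄_congr fun i j m p => ?_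
  rw [swap_both, add_right_comm]
  simp only [c, mul_comm (structureConstants b br j _ p)]

end LieBracket

section JacobiLie

variable {ι R V : Type*} [CommRing R] [AddCommGroup V] [Module R V]

/-- The left-hand side of the Jacobi-Lie compatibility condition (i), paired with vectors `x, y`
and covectors `ξ, η`. A contraction such as `f_{ik}^m f̃^{kn}_j` becomes the composition
`ξ ∘ [x, ·]` inserted into the dual bracket. -/
def compatibilityForm (br : V →ₗ[R] V →ₗ[R] V) (dbr : Dual R V →ₗ[R] Dual R V →ₗ[R] Dual R V)
    (X : V) (φ : Dual R V) (x y : V) (ξ η : Dual R V) : R :=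
  dbr ξ η (br x y) - dbr (ξ ∘ₗ br x) η y - dbr ξ (η ∘ₗ br x) y
    - dbr (ξ ∘ₗ br.flip y) η x - dbr ξ (η ∘ₗ br.flip y) x
    + φ x * dbr ξ η y - φ y * dbr ξ η x + ξ X * η (br x y) - η X * ξ (br x y)
    + (ξ (br x X) - ξ X * φ x) * η y - (ξ (br y X) - ξ X * φ y) * η x
    - (η (br x X) - η X * φ x) * ξ y + (η (br y X) - η X * φ y) * ξ x

/-- A Jacobi-Lie bialgebra on a module `V`, without reference to a basis: Lie brackets on `V` and on
its dual, with the vector `X = αⁱ bᵢ` and the covector `φ = βᵢ bⁱ` playing the role of the two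
1-cocycles. -/
structure IsJacobiLieBialgebraOn (br : V →ₗ[R] V →ₗ[R] V)
    (dbr : Dual R V →ₗ[R] Dual R V →ₗ[R] Dual R V) (X : V) (φ : Dual R V) : Prop where
  isLieBracket : IsLieBracket br
  isLieBracket_dual : IsLieBracket dbr
  compatibility : ∀ x y ξ η, compatibilityForm br dbr X φ x y ξ η = 0
  apply_eq_zero : φ X = 0
  bracket_eq_dual_bracket : ∀ x ξ, ξ (br X x) - dbr φ ξ x = 0
  dual_bracket_apply_eq_zero : ∀ ξ η, dbr ξ η X = 0
  apply_bracket_eq_zero : ∀ x y, φ (br x y) = 0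

variable (b : Basis ι R V) (br : V →ₗ[R] V →ₗ[R] V)
  (dbr : Dual R V →ₗ[R] Dual R V →ₗ[R] Dual R V) (X : V) (φ : Dual R V)

theorem compatibility_iff_forall_basis [Finite ι] :
    (∀ x y ξ η, compatibilityForm br dbr X φ x y ξ η = 0) ↔
      ∀ i j m p, compatibilityForm br dbr X φ (b i) (b j) (b.coord m) (b.coord p) = 0 := by
  classical
  rw [← b.coe_dualBasis]
  refine forall₄_eq_zero_iff_basis b b b.dualBasis b.dualBasis ?_ ?_ ?_ ?_ <;>
  · intros
    constructor <;> intros <;>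
    · simp only [compatibilityForm, map_add, map_smul, LinearMap.add_apply, LinearMap.smul_apply,
        LinearMap.comp_add, LinearMap.comp_smul, LinearMap.add_comp, LinearMap.smul_comp,
        smul_eq_mul]
      ring

variable [Fintype ι]

theorem bracket_eq_iff_structureConstants [DecidableEq ι] :
    (∀ x ξ, ξ (br X x) - dbr φ ξ x = 0) ↔ ∀ i m,
      (∑ k, b.coord k X * structureConstants b br k i m)
        - (∑ k, φ (b k) * structureConstants b.dualBasis dbr k m i) = 0 := by
  have bilin := forall₂_eq_zero_iff_basis b b.dualBasis (φ := fun x ξ => ξ (br X x) - dbr φ ξ x)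
    (fun ξ => (ξ ∘ₗ br X - dbr φ ξ).isLinear)
    (fun x => (Dual.eval R V (br X x) - Dual.eval R V x ∘ₗ dbr φ).isLinear)
  have contract (i m : ι) : ∑ k, b.coord k X * structureConstants b br k i m =
      b.coord m (br X (b i)) := sum_coord_smul_map b (b.coord m ∘ₗ br.flip (b i)) X
  rw [bilin, b.coe_dualBasis]
  simp only [contract, sum_apply_mul_structureConstants_fst]

theorem dual_bracket_apply_eq_zero_iff_structureConstants [DecidableEq ι] :
    (∀ ξ η, dbr ξ η X = 0) ↔
      ∀ m p, ∑ i, b.coord i X * structureConstants b.dualBasis dbr m p i = 0 := by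
  have bilin := forall₂_eq_zero_iff_basis b.dualBasis b.dualBasis (φ := fun ξ η => dbr ξ η X)
    (fun η => (Dual.eval R V X ∘ₗ dbr.flip η).isLinear)
    (fun ξ => (Dual.eval R V X ∘ₗ dbr ξ).isLinear)
  rw [bilin, b.coe_dualBasis]
  simp only [structureConstants_dualBasis, ← smul_eq_mul, sum_coord_smul_map]

theorem apply_bracket_eq_zero_iff_structureConstants :
    (∀ x y, φ (br x y) = 0) ↔ ∀ m p, ∑ i, φ (b i) * structureConstants b br m p i = 0 := by
  have bilin := forall₂_eq_zero_iff_basis b b (φ := fun x y => φ (br x y))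
    (fun y => (φ ∘ₗ br.flip y).isLinear) (fun x => (φ ∘ₗ br x).isLinear)
  rw [bilin]
  simp only [structureConstants, mul_comm (φ _), ← smul_eq_mul, sum_coord_smul_map]

theorem compatibilityForm_basis [DecidableEq ι] (i j m p : ι) :
    let f := structureConstants b br
    let ft := structureConstants b.dualBasis dbr
    compatibilityForm br dbr X φ (b i) (b j) (b.coord m) (b.coord p) =
      (∑ k, f i j k * ft m p k) - (∑ k, f i k m * ft k p j)
      - (∑ k, f i k p * ft m k j) - (∑ k, f k j m * ft k p i)
      - (∑ k, f k j p * ft m k i)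
      + φ (b i) * ft m p j - φ (b j) * ft m p i + b.coord m X * f i j p - b.coord p X * f i j m
      + ((∑ k, b.coord k X * f i k m) - b.coord m X * φ (b i)) * (if j = p then 1 else 0)
      - ((∑ k, b.coord k X * f j k m) - b.coord m X * φ (b j)) * (if i = p then 1 else 0)
      - ((∑ k, b.coord k X * f i k p) - b.coord p X * φ (b i)) * (if j = m then 1 else 0)
      + ((∑ k, b.coord k X * f j k p) - b.coord p X * φ (b j)) * (if i = m then 1 else 0) := by
  intro f ft
  have pair : ∑ k, f i j k * ft m p k = dbr (b.coord m) (b.coord p) (br (b i) (b j)) := by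
    simp only [ft, structureConstants_dualBasis]
    exact sum_coord_smul_map b (dbr (b.coord m) (b.coord p)) (br (b i) (b j))
  have ad_fst :
      ∑ k, f i k m * ft k p j = dbr (b.coord m ∘ₗ br (b i)) (b.coord p) (b j) :=
    sum_apply_mul_structureConstants_fst b dbr (b.coord m ∘ₗ br (b i)) p j
  have ad_snd :
      ∑ k, f i k p * ft m k j = dbr (b.coord m) (b.coord p ∘ₗ br (b i)) (b j) :=
    sum_apply_mul_structureConstants_snd b dbr (b.coord p ∘ₗ br (b i)) m j
  have flip_fst : ∑ k, f k j m * ft k p i =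
      dbr (b.coord m ∘ₗ br.flip (b j)) (b.coord p) (b i) :=
    sum_apply_mul_structureConstants_fst b dbr (b.coord m ∘ₗ br.flip (b j)) p i
  have flip_snd : ∑ k, f k j p * ft m k i =
      dbr (b.coord m) (b.coord p ∘ₗ br.flip (b j)) (b i) :=
    sum_apply_mul_structureConstants_snd b dbr (b.coord p ∘ₗ br.flip (b j)) m i
  have ad_vector (i m : ι) : ∑ k, b.coord k X * f i k m = b.coord m (br (b i) X) :=
    sum_coord_smul_map b (b.coord m ∘ₗ br (b i)) X
  have coord_basis (i j : ι) : b.coord j (b i) = if i = j then 1 else 0 := by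
    rw [Basis.coord_apply, b.repr_self, Finsupp.single_apply]
  rw [pair, ad_fst, ad_snd, flip_fst, flip_snd, ad_vector, ad_vector, ad_vector, ad_vector]
  simp only [← coord_basis, f, ft, structureConstants_dualBasis, structureConstants,
    compatibilityForm]

end JacobiLie

section Components

variable {n : ℕ} {V : Type*} [AddCommGroup V] [Module ℝ V]

theorem isJacobiLieBialgebraOn_iff_components (b : Basis (Fin n) ℝ V) (br : V →ₗ[ℝ] V →ₗ[ℝ] V)
    (dbr : Dual ℝ V →ₗ[ℝ] Dual ℝ V →ₗ[ℝ] Dual ℝ V) (X : V) (φ : Dual ℝ V) :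
    IsJacobiLieBialgebraOn br dbr X φ ↔
      IsJacobiLieBialgebra n (structureConstants b br) (structureConstants b.dualBasis dbr)
        (fun i => b.coord i X) (fun i => φ (b i)) := by
  have antisymm := antisymm_iff_structureConstants b br
  have antisymm_dual := antisymm_iff_structureConstants b.dualBasis dbr
  have jacobi := jacobi_iff_structureConstants b br
  have jacobi_dual := jacobi_iff_structureConstants_cyclic b.dualBasis dbr
  have compatibility := compatibility_iff_forall_basis b br dbr X φ
  simp only [compatibilityForm_basis] at compatibility
  have pairing : φ X = ∑ i, b.coord i X * φ (b i) := (sum_coord_smul_map b φ X).symm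
  have mixed := bracket_eq_iff_structureConstants b br dbr X φ
  have dual_X := dual_bracket_apply_eq_zero_iff_structureConstants b dbr X
  have φ_bracket := apply_bracket_eq_zero_iff_structureConstants b br φ
  constructor
  · intro h
    have ft_antisymm := antisymm_dual.1 h.isLieBracket_dual.antisymm
    exact ⟨antisymm.1 h.isLieBracket.antisymm, jacobi.1 h.isLieBracket.jacobi, ft_antisymm,
      (jacobi_dual ft_antisymm).1 h.isLieBracket_dual.jacobi, compatibility.1 h.compatibility,
      pairing.symm.trans h.apply_eq_zero, mixed.1 h.bracket_eq_dual_bracket,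
      dual_X.1 h.dual_bracket_apply_eq_zero, φ_bracket.1 h.apply_bracket_eq_zero⟩
  · rintro ⟨f_antisymm, f_jacobi, ft_antisymm, ft_jacobi, compat, ab, af_bft, aft, bf⟩
    exact ⟨⟨antisymm.2 f_antisymm, jacobi.2 f_jacobi⟩,
      ⟨antisymm_dual.2 ft_antisymm, (jacobi_dual ft_antisymm).2 ft_jacobi⟩,
      compatibility.2 compat, pairing.trans ab, mixed.2 af_bft, dual_X.2 aft, φ_bracket.2 bf⟩

theorem IsJacobiLieBialgebra.change_of_basis {f ft : Fin n → Fin n → Fin n → ℝ} {α β : Fin n → ℝ}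
    (hJ : IsJacobiLieBialgebra n f ft α β) (b b' : Basis (Fin n) ℝ V) :
    IsJacobiLieBialgebra n
      (fun i j q => ∑ l, (∑ m, ∑ p, b.coord m (b' i) * f m p l * b.coord p (b' j)) *
        b'.coord q (b l))
      (fun i j q => ∑ k, ∑ l, ∑ m,
        b'.coord i (b k) * ft k l m * b'.coord j (b l) * b.coord m (b' q))
      (fun i => ∑ m, b'.coord i (b m) * α m) (fun i => ∑ m, b.coord m (b' i) * β m) := by
  set br := bracketOfConstants b f
  set dbr := bracketOfConstants b.dualBasis ft
  set X : V := ∑ m, α m • b m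
  set φ : Dual ℝ V := ∑ m, β m • b.coord m
  have intrinsic : IsJacobiLieBialgebraOn br dbr X φ := by
    have coord_X (i : Fin n) : b.coord i X = α i := by simp [X, Finsupp.single_apply]
    have φ_basis (i : Fin n) : φ (b i) = β i := by simp [φ, Finsupp.single_apply]
    rwa [isJacobiLieBialgebraOn_iff_components b, structureConstants_bracketOfConstants,
      structureConstants_bracketOfConstants, funext coord_X, funext φ_basis]
  convert (isJacobiLieBialgebraOn_iff_components b' br dbr X φ).1 intrinsic using 1
  · funext i j q
    rw [structureConstants, ← sum_coord_smul_map b (b'.coord q) (br (b' i) (b' j))]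
    simp only [coord_bracket, br, structureConstants_bracketOfConstants, smul_eq_mul]
  · funext i j q
    rw [structureConstants_dualBasis, dual_bracket_apply b, structureConstants_bracketOfConstants]
  · funext i
    simp only [X, map_sum, map_smul, smul_eq_mul, mul_comm]
  · funext i
    simp only [φ, LinearMap.sum_apply, LinearMap.smul_apply, smul_eq_mul, mul_comm]

end Components

section Matrix

open Matrix

variable {ι R : Type*} [Fintype ι] [DecidableEq ι] [CommRing R]

/-- The basis of `ι → R` formed by the rows of an invertible matrix. -/
noncomputable def rowBasis (A : Matrix ι ι R) (hA : IsUnit A.det) : Basis ι R (ι → R) :=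
  (Pi.basisFun R ι).map
    (toLinearEquivRight'OfInv (nonsing_inv_mul A hA) (mul_nonsing_inv A hA))

theorem coord_rowBasis (A : Matrix ι ι R) (hA : IsUnit A.det) (i m : ι) :
    (Pi.basisFun R ι).coord m (rowBasis A hA i) = A i m := by
  simp [rowBasis, toLinearEquivRight'OfInv]

theorem rowBasis_coord (A : Matrix ι ι R) (hA : IsUnit A.det) (i k : ι) :
    (rowBasis A hA).coord i (Pi.basisFun R ι k) = A⁻¹ᵀ i k := by
  simp [rowBasis, toLinearEquivRight'OfInv]

theorem sum_mul_inv_of_automorphism {f : ι → ι → ι → R} {A : Matrix ι ι R} (hA : IsUnit A.det)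
    (hAut : ∀ i j k, (∑ m, ∑ p, A i m * f m p k * A j p) = ∑ l, f i j l * A l k) (i j q : ι) :
    ∑ k, (∑ m, ∑ p, A i m * f m p k * A j p) * A⁻¹ k q = f i j q := by
  calc ∑ k, (∑ m, ∑ p, A i m * f m p k * A j p) * A⁻¹ k q
      = (f i j ᵥ* A ᵥ* A⁻¹) q := by simp only [hAut]; rfl
    _ = f i j q := by rw [vecMul_vecMul, mul_nonsing_inv A hA, vecMul_one]

end Matrix

/-- transporting a Jacobi-Lie bialgebra along an automorphism `A` of `g`
(with `f̃'ⁱʲ_n = (A⁻ᵀ)ⁱ_k f̃ᵏˡ_m (A⁻ᵀ)ʲ_l (Aᵀ)ᵐ_n`, `α'ⁱ = (A⁻ᵀ)ⁱ_m αᵐ`, `β'_i = A_iᵐ β_m`)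
again yields a Jacobi-Lie bialgebra. -/
theorem stmt0 (n : ℕ) (hn : 0 < n) (f ft : Fin n → Fin n → Fin n → ℝ)
    (α β : Fin n → ℝ)
    (hJ : IsJacobiLieBialgebra n f ft α β)
    (A : Matrix (Fin n) (Fin n) ℝ) (hA : IsUnit A.det)
    (hAut : ∀ i j k, (∑ m, ∑ p, A i m * f m p k * A j p) = ∑ l, f i j l * A l k) :
    IsJacobiLieBialgebra n f
      (fun i j q => ∑ k, ∑ l, ∑ m, (A⁻¹).transpose i k * ft k l m * (A⁻¹).transpose j l * A.transpose m q)
      (fun i => ∑ m, (A⁻¹).transpose i m * α m)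
      (fun i => ∑ m, A i m * β m) := by
  have hJ' := hJ.change_of_basis (Pi.basisFun ℝ (Fin n)) (rowBasis A hA)
  simp only [coord_rowBasis, rowBasis_coord, Matrix.transpose_apply,
    sum_mul_inv_of_automorphism hA hAut] at hJ'
  exact hJ'
end

section
/- Let n be a positive integer and let (f, f̃, α, β) be a Jacobi-Lie bialgebra in structure-constant form on ℝ^n. Then the dual quadruple (f̃, f, β, α) — obtained by interchanging the roles of the two Lie algebras, i.e. taking f̃^{ij}_k as the structure constants of the first Lie algebra, f_{ij}^k as those of the second, β as the new α-vector and α as the new β-vector — is also a Jacobi-Lie bialgebra in structure-constant form on ℝ^n. -/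
/-!
Condition (iii) says that the matrix of `ad X₀` on `g` is the transpose of the matrix of `ad φ₀`
on `g*`. This settles the only term of the compatibility condition (i) which is not visibly
self-dual, so the left-hand side of (i) is unchanged when `(f, α)` is exchanged with `(f̃, β)` and
the lower index pair with the upper one. The other conditions are self-dual or exchanged in pairs.
-/

section StructureConstants

open scoped Matrix

variable {R ι : Type*} [CommRing R]

/-- The tensor `b ∧ f̃ + a ∧ f`: the terms of the compatibility condition (i) in which the
cocycles `a`, `b` multiply the brackets without contraction. As in all tensors below, `i`, `j` are
the lower and `m`, `p` the upper indices. -/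
def cocycleWedgeTensor (f ft : ι → ι → ι → R) (a b : ι → R) (i j m p : ι) : R :=
  b i * ft m p j - b j * ft m p i + a m * f i j p - a p * f i j m

theorem cocycleWedgeTensor_swap (f ft : ι → ι → ι → R) (a b : ι → R) (i j m p : ι) :
    cocycleWedgeTensor ft f b a m p i j = cocycleWedgeTensor f ft a b i j m p := by
  simp only [cocycleWedgeTensor]
  ring

/-- The product `T ∧ δ` of a matrix with the identity, antisymmetrized in `i`, `j` and in `m`, `p`:
the shape of the Kronecker delta terms of the compatibility condition (i). -/
def wedgeIdentity [DecidableEq ι] (T : ι → ι → R) (i j m p : ι) : R :=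
  T i m * (if j = p then 1 else 0) - T j m * (if i = p then 1 else 0)
    - T i p * (if j = m then 1 else 0) + T j p * (if i = m then 1 else 0)

theorem wedgeIdentity_swap [DecidableEq ι] {S T : ι → ι → R} (hST : ∀ i m, S m i = T i m)
    (i j m p : ι) : wedgeIdentity S m p i j = wedgeIdentity T i j m p := by
  simp only [wedgeIdentity, hST, eq_comm (a := m), eq_comm (a := p)]
  ring

variable [Fintype ι]

/-- The tensor whose vanishing says that the brackets `f` and `f̃` on dual spaces form a Lie
bialgebra, i.e. that the cobracket dual to `f̃` is a cocycle for `f`. -/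
def lieBialgebraTensor (f ft : ι → ι → ι → R) (i j m p : ι) : R :=
  ∑ k, f i j k * ft m p k - ∑ k, f i k m * ft k p j - ∑ k, f i k p * ft m k j
    - ∑ k, f k j m * ft k p i - ∑ k, f k j p * ft m k i

theorem lieBialgebraTensor_swap (f ft : ι → ι → ι → R) (i j m p : ι) :
    lieBialgebraTensor ft f m p i j = lieBialgebraTensor f ft i j m p := by
  simp only [lieBialgebraTensor, mul_comm (ft _ _ _)]
  ring

/-- The matrix of `ad v`: the coefficient of `e m` in `⁅v, e i⁆`, for `v = ∑ k, v k • e k`. -/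
def adCoeff (c : ι → ι → ι → R) (v : ι → R) (i m : ι) : R :=
  ∑ k, v k * c k i m

theorem sum_mul_eq_neg_adCoeff {c : ι → ι → ι → R} (hc : ∀ i j k, c i j k = -c j i k)
    (v : ι → R) (i m : ι) : ∑ k, v k * c i k m = -adCoeff c v i m := by
  simp only [hc i, mul_neg, Finset.sum_neg_distrib, adCoeff]

/-- The matrix of `ad a + a ⊗ b`, which enters the compatibility condition (i) through its product
with the identity. -/
def twistedAdCoeff (f : ι → ι → ι → R) (a b : ι → R) (i m : ι) : R :=
  adCoeff f a i m + a m * b i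

theorem twistedAdCoeff_swap {f ft : ι → ι → ι → R} {a b : ι → R}
    (had : ∀ i m, adCoeff f a i m = adCoeff ft b m i) (i m : ι) :
    twistedAdCoeff ft b a m i = twistedAdCoeff f a b i m := by
  rw [twistedAdCoeff, twistedAdCoeff, had, mul_comm]

/-- The left-hand side of the compatibility condition (i) of a Jacobi-Lie bialgebra. The sign of
the last term comes from writing `a^k f_{ik}^m` as `-a^k f_{ki}^m`. -/
def jacobiLieTensor [DecidableEq ι] (f ft : ι → ι → ι → R) (a b : ι → R) (i j m p : ι) : R :=
  lieBialgebraTensor f ft i j m p + cocycleWedgeTensor f ft a b i j m p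
    - wedgeIdentity (twistedAdCoeff f a b) i j m p

theorem jacobiLieTensor_swap [DecidableEq ι] {f ft : ι → ι → ι → R} {a b : ι → R}
    (had : ∀ i m, adCoeff f a i m = adCoeff ft b m i) (i j m p : ι) :
    jacobiLieTensor ft f b a m p i j = jacobiLieTensor f ft a b i j m p := by
  rw [jacobiLieTensor, lieBialgebraTensor_swap, cocycleWedgeTensor_swap,
    wedgeIdentity_swap (twistedAdCoeff_swap had), jacobiLieTensor]

theorem jacobiLieTensor_eq_of_antisymm [DecidableEq ι] {f : ι → ι → ι → R}
    (hf : ∀ i j k, f i j k = -f j i k) (ft : ι → ι → ι → R) (a b : ι → R) (i j m p : ι) :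
    jacobiLieTensor f ft a b i j m p =
      ∑ k, f i j k * ft m p k - ∑ k, f i k m * ft k p j
      - ∑ k, f i k p * ft m k j - ∑ k, f k j m * ft k p i
      - ∑ k, f k j p * ft m k i
      + b i * ft m p j - b j * ft m p i + a m * f i j p - a p * f i j m
      + (∑ k, a k * f i k m - a m * b i) * (if j = p then 1 else 0)
      - (∑ k, a k * f j k m - a m * b j) * (if i = p then 1 else 0)
      - (∑ k, a k * f i k p - a p * b i) * (if j = m then 1 else 0)
      + (∑ k, a k * f j k p - a p * b j) * (if i = m then 1 else 0) := by
  simp only [jacobiLieTensor, lieBialgebraTensor, cocycleWedgeTensor, wedgeIdentity,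
    twistedAdCoeff, sum_mul_eq_neg_adCoeff hf]
  ring

/-- The coefficients `c i j k` of `⁅e i, e j⁆ = ∑ k, c i j k • e k` for a Lie algebra which is free
over `R` with basis `e`. In characteristic two `alternating` does not follow from `antisymm`. -/
structure IsLieStructureConstants (c : ι → ι → ι → R) : Prop where
  alternating : ∀ i k, c i i k = 0
  antisymm : ∀ i j k, c i j k = -c j i k
  jacobi : ∀ i j m p,
    ∑ k, c i j k * c k m p + ∑ k, c j m k * c k i p + ∑ k, c m i k * c k j p = 0

theorem sum_mul_eq_sum_mul_swap_of_antisymm {c : ι → ι → ι → R}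
    (hc : ∀ i j k, c i j k = -c j i k) (i j m p : ι) :
    ∑ k, c i j k * c m k p = ∑ k, c j i k * c k m p :=
  Finset.sum_congr rfl fun k _ => by rw [hc i j, hc m k, neg_mul_neg]

section TorsionFree

variable [IsAddTorsionFree R] {c : ι → ι → ι → R}

theorem isLieStructureConstants_iff_antisymm_and_jacobi :
    IsLieStructureConstants c ↔ (∀ i j k, c i j k = -c j i k) ∧ ∀ i j m p,
      ∑ k, c i j k * c k m p + ∑ k, c j m k * c k i p + ∑ k, c m i k * c k j p = 0 :=
  ⟨fun h => ⟨h.antisymm, h.jacobi⟩, fun h => ⟨fun i k => self_eq_neg.1 (h.1 i i k), h.1, h.2⟩⟩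

theorem isLieStructureConstants_iff_antisymm_and_jacobi_lower :
    IsLieStructureConstants c ↔ (∀ i j k, c i j k = -c j i k) ∧ ∀ i j m p,
      ∑ k, c i j k * c k m p + ∑ k, c i k p * c m j k + ∑ k, c j k p * c i m k = 0 := by
  rw [isLieStructureConstants_iff_antisymm_and_jacobi]
  refine and_congr_right fun hc => ?_
  have reorder (i j m p : ι) : ∑ k, c i k p * c m j k = ∑ k, c j m k * c k i p := by
    simp only [mul_comm (c i _ p), sum_mul_eq_sum_mul_swap_of_antisymm hc m j]
  simp only [reorder]

theorem isLieStructureConstants_iff_antisymm_and_jacobi_upper :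
    IsLieStructureConstants c ↔ (∀ i j k, c i j k = -c j i k) ∧ ∀ i j m p,
      ∑ k, c i j k * c k m p + ∑ k, c i m k * c j k p + ∑ k, c j m k * c k i p = 0 := by
  rw [isLieStructureConstants_iff_antisymm_and_jacobi]
  refine and_congr_right fun hc => ?_
  simp only [sum_mul_eq_sum_mul_swap_of_antisymm hc, add_right_comm]

end TorsionFree

/-- Jacobi-Lie bialgebras in structure-constant form over an arbitrary commutative ring, on a free
module with a finite basis. Both Jacobi identities are put in cyclic form. -/
structure IsJacobiLieBialgebraOver [DecidableEq ι] (f ft : ι → ι → ι → R) (a b : ι → R) :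
    Prop where
  lie : IsLieStructureConstants f
  lie_dual : IsLieStructureConstants ft
  compatible : ∀ i j m p, jacobiLieTensor f ft a b i j m p = 0
  dotProduct_eq_zero : a ⬝ᵥ b = 0
  adCoeff_eq : ∀ i m, adCoeff f a i m = adCoeff ft b m i
  dotProduct_dual_bracket : ∀ m p, a ⬝ᵥ ft m p = 0
  dotProduct_bracket : ∀ i j, b ⬝ᵥ f i j = 0

end StructureConstants

theorem isJacobiLieBialgebra_iff {n : ℕ} {f ft : Fin n → Fin n → Fin n → ℝ} {a b : Fin n → ℝ} :
    IsJacobiLieBialgebra n f ft a b ↔ IsJacobiLieBialgebraOver f ft a b := by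
  constructor
  · rintro ⟨hf, hfJ, hft, hftJ, hcompat, hab, had, haft, hbf⟩
    exact
      { lie := isLieStructureConstants_iff_antisymm_and_jacobi_lower.2 ⟨hf, hfJ⟩
        lie_dual := isLieStructureConstants_iff_antisymm_and_jacobi_upper.2 ⟨hft, hftJ⟩
        compatible := fun i j m p =>
          (jacobiLieTensor_eq_of_antisymm hf ft a b i j m p).trans (hcompat i j m p)
        dotProduct_eq_zero := hab
        adCoeff_eq := fun i m => sub_eq_zero.1 (had i m)
        dotProduct_dual_bracket := haft
        dotProduct_bracket := hbf }
  · intro h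
    obtain ⟨hf, hfJ⟩ := isLieStructureConstants_iff_antisymm_and_jacobi_lower.1 h.lie
    obtain ⟨hft, hftJ⟩ := isLieStructureConstants_iff_antisymm_and_jacobi_upper.1 h.lie_dual
    have hcompat i j m p :=
      (jacobiLieTensor_eq_of_antisymm hf ft a b i j m p).symm.trans (h.compatible i j m p)
    exact ⟨hf, hfJ, hft, hftJ, hcompat, h.dotProduct_eq_zero,
      fun i m => sub_eq_zero.2 (h.adCoeff_eq i m), h.dotProduct_dual_bracket, h.dotProduct_bracket⟩

theorem stmt1_general {R ι : Type*} [CommRing R] [Fintype ι] [DecidableEq ι]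
    {f ft : ι → ι → ι → R} {a b : ι → R} (h : IsJacobiLieBialgebraOver f ft a b) :
    IsJacobiLieBialgebraOver ft f b a where
  lie := h.lie_dual
  lie_dual := h.lie
  compatible i j m p := (jacobiLieTensor_swap h.adCoeff_eq m p i j).trans (h.compatible m p i j)
  dotProduct_eq_zero := (dotProduct_comm b a).trans h.dotProduct_eq_zero
  adCoeff_eq i m := (h.adCoeff_eq m i).symm
  dotProduct_dual_bracket := h.dotProduct_bracket
  dotProduct_bracket := h.dotProduct_dual_bracket

/-- the dual of a Jacobi-Lie bialgebra, interchanging the two Lie algebras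
and the two 1-cocycles, is again a Jacobi-Lie bialgebra. -/
theorem stmt1 (n : ℕ) (hn : 0 < n) (f ft : Fin n → Fin n → Fin n → ℝ)
    (α β : Fin n → ℝ)
    (hJ : IsJacobiLieBialgebra n f ft α β) :
    IsJacobiLieBialgebra n ft f β α :=
  isJacobiLieBialgebra_iff.2 (stmt1_general (isJacobiLieBialgebra_iff.1 hJ))
end

section
/- Let g be the 3-dimensional Bianchi Lie algebra III with basis X₁, X₂, X₃ and brackets [X₁,X₂] = −(X₂+X₃), [X₁,X₃] = −(X₂+X₃). For every real number a ≠ 0, let g* be the Lie algebra III.i with dual basis X̃¹, X̃², X̃³ and single nonzero bracket [X̃²,X̃³] = −((a+2)/a)(X̃²+X̃³). With X₀ = −(X₂−X₃) (i.e. α = (0,−1,1)) and φ₀ = a X̃¹ (i.e. β = (a,0,0)), the quadruple of corresponding structure constants and vectors (f, f̃, α, β) is a Jacobi-Lie bialgebra in structure-constant form on ℝ³. -/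
/-!
Both brackets have a one-dimensional derived algebra and the shape `[x, y] = (ξ ∧ η)(x, y) w`,
with the same pair `(η, w) = (X̃² + X̃³, X₂ + X₃)` serving both: up to scalars `s` and `t`,
`f = s (φ₀ ∧ η) ⊗ w` and `f̃ = t (X₀ ∧ w) ⊗ η`. Such brackets always form an ordinary Lie
bialgebra, and conditions (ii)–(v) hold because `φ₀(X₀) = η(X₀) = φ₀(w) = 0`. The terms of the
compatibility condition (i) involving `X₀` and `φ₀` then cancel as soon as the identity equals
`(s + t) w ⊗ η` modulo `X₀ ⊗ V*` and `V ⊗ φ₀`. Here `s = -1/a` and `t = (a + 2)/(2a)`, so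
`s + t = 1/2 = 1/η(w)`.
-/

open Matrix

section WedgeBracket

variable {ι R : Type*} [CommRing R]

/-- The structure constants of the bracket `[x, y] = (ξ ∧ η)(x, y) w`, where `ξ` and `η` are
covectors and `w` is a vector, all given by their coefficients. The same formula describes
brackets on the dual space, with two vectors and a covector as arguments. -/
def wedgeBracket (ξ η w : ι → R) (i j k : ι) : R :=
  (ξ i * η j - ξ j * η i) * w k

theorem wedgeBracket_antisymm (ξ η w : ι → R) (i j k : ι) :
    wedgeBracket ξ η w i j k = -wedgeBracket ξ η w j i k := by
  unfold wedgeBracket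
  ring

theorem wedge_mul_wedge_of_one_eq [DecidableEq ι] {r : R} {α β w η μ e : ι → R}
    (hone : (1 : Matrix ι ι R) = r • vecMulVec η w + vecMulVec μ α + vecMulVec β e) (i j m p : ι) :
    r * ((β i * η j - β j * η i) * (α m * w p - α p * w m)) =
      α m * β i * (if j = p then 1 else 0) - α m * β j * (if i = p then 1 else 0) -
        α p * β i * (if j = m then 1 else 0) + α p * β j * (if i = m then 1 else 0) := by
  have hδ (i m : ι) :
      (if i = m then 1 else 0) = r * (η i * w m) + μ i * α m + β i * e m := by
    simpa [one_apply, vecMulVec_apply] using congrFun₂ hone i m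
  simp only [hδ]
  ring

variable [Fintype ι]

theorem sum_mul_wedgeBracket_right (v ξ η w : ι → R) (i j : ι) :
    ∑ k, v k * wedgeBracket ξ η w i j k = (ξ i * η j - ξ j * η i) * (v ⬝ᵥ w) := by
  simp only [wedgeBracket, dotProduct, Finset.mul_sum]
  exact Finset.sum_congr rfl fun k _ ↦ by ring

theorem sum_mul_wedgeBracket_left (v ξ η w : ι → R) (j m : ι) :
    ∑ k, v k * wedgeBracket ξ η w k j m = ((v ⬝ᵥ ξ) * η j - (v ⬝ᵥ η) * ξ j) * w m := by
  simp only [wedgeBracket, dotProduct, Finset.sum_mul, ← Finset.sum_sub_distrib]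
  exact Finset.sum_congr rfl fun k _ ↦ by ring

theorem sum_mul_wedgeBracket_middle (v ξ η w : ι → R) (i m : ι) :
    ∑ k, v k * wedgeBracket ξ η w i k m = ((v ⬝ᵥ η) * ξ i - (v ⬝ᵥ ξ) * η i) * w m := by
  simp only [wedgeBracket_antisymm ξ η w i, mul_neg, Finset.sum_neg_distrib,
    sum_mul_wedgeBracket_left]
  ring

theorem sum_wedgeBracket_mul_wedgeBracket_right_left (ξ η w ξ' η' w' : ι → R) (i j m p : ι) :
    ∑ k, wedgeBracket ξ η w i j k * wedgeBracket ξ' η' w' k m p =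
      (ξ i * η j - ξ j * η i) * (((w ⬝ᵥ ξ') * η' m - (w ⬝ᵥ η') * ξ' m) * w' p) := by
  rw [← sum_mul_wedgeBracket_left, Finset.mul_sum]
  exact Finset.sum_congr rfl fun k _ ↦ mul_assoc _ _ _

theorem sum_wedgeBracket_mul_wedgeBracket_right_middle (ξ η w ξ' η' w' : ι → R) (i j m p : ι) :
    ∑ k, wedgeBracket ξ η w i j k * wedgeBracket ξ' η' w' m k p =
      (ξ i * η j - ξ j * η i) * (((w ⬝ᵥ η') * ξ' m - (w ⬝ᵥ ξ') * η' m) * w' p) := by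
  rw [← sum_mul_wedgeBracket_middle, Finset.mul_sum]
  exact Finset.sum_congr rfl fun k _ ↦ mul_assoc _ _ _

theorem sum_wedgeBracket_mul_wedgeBracket_right_right (ξ η w ξ' η' w' : ι → R) (i j m p : ι) :
    ∑ k, wedgeBracket ξ η w i j k * wedgeBracket ξ' η' w' m p k =
      (ξ i * η j - ξ j * η i) * ((ξ' m * η' p - ξ' p * η' m) * (w ⬝ᵥ w')) := by
  rw [← sum_mul_wedgeBracket_right, Finset.mul_sum]
  exact Finset.sum_congr rfl fun k _ ↦ mul_assoc _ _ _

theorem sum_wedgeBracket_mul_wedgeBracket_middle_left (ξ η w ξ' η' w' : ι → R) (i j m p : ι) :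
    ∑ k, wedgeBracket ξ η w i k m * wedgeBracket ξ' η' w' k p j =
      (ξ i * ((η ⬝ᵥ ξ') * η' p - (η ⬝ᵥ η') * ξ' p) -
        η i * ((ξ ⬝ᵥ ξ') * η' p - (ξ ⬝ᵥ η') * ξ' p)) * w m * w' j := by
  calc
    _ = (ξ i * ∑ k, η k * wedgeBracket ξ' η' w' k p j -
        η i * ∑ k, ξ k * wedgeBracket ξ' η' w' k p j) * w m := by
      simp only [Finset.mul_sum, ← Finset.sum_sub_distrib, Finset.sum_mul]
      refine Finset.sum_congr rfl fun k _ ↦ ?_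
      rw [wedgeBracket]
      ring
    _ = _ := by
      simp only [sum_mul_wedgeBracket_left]
      ring

theorem wedgeBracket_jacobi (ξ η w : ι → R) (i j m p : ι) :
    ∑ k, wedgeBracket ξ η w i j k * wedgeBracket ξ η w k m p +
      ∑ k, wedgeBracket ξ η w i m k * wedgeBracket ξ η w j k p +
      ∑ k, wedgeBracket ξ η w j m k * wedgeBracket ξ η w k i p = 0 := by
  simp only [sum_wedgeBracket_mul_wedgeBracket_right_left,
    sum_wedgeBracket_mul_wedgeBracket_right_middle]
  ring

theorem wedgeBracket_jacobi' (ξ η w : ι → R) (i j m p : ι) :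
    ∑ k, wedgeBracket ξ η w i j k * wedgeBracket ξ η w k m p +
      ∑ k, wedgeBracket ξ η w i k p * wedgeBracket ξ η w m j k +
      ∑ k, wedgeBracket ξ η w j k p * wedgeBracket ξ η w i m k = 0 := by
  simp only [fun i k ↦ mul_comm (wedgeBracket ξ η w i k p),
    sum_wedgeBracket_mul_wedgeBracket_right_left, sum_wedgeBracket_mul_wedgeBracket_right_middle]
  ring

theorem wedgeBracket_cocycle (ξ v η w : ι → R) (i j m p : ι) :
    ∑ k, wedgeBracket ξ η w i j k * wedgeBracket v w η m p k -
      ∑ k, wedgeBracket ξ η w i k m * wedgeBracket v w η k p j -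
      ∑ k, wedgeBracket ξ η w i k p * wedgeBracket v w η m k j -
      ∑ k, wedgeBracket ξ η w k j m * wedgeBracket v w η k p i -
      ∑ k, wedgeBracket ξ η w k j p * wedgeBracket v w η m k i = 0 := by
  simp only [wedgeBracket_antisymm v w η m, fun k l ↦ wedgeBracket_antisymm ξ η w k j l,
    mul_neg, neg_mul, Finset.sum_neg_distrib, sum_wedgeBracket_mul_wedgeBracket_right_right,
    sum_wedgeBracket_mul_wedgeBracket_middle_left, dotProduct_comm w η]
  ring

end WedgeBracket

section JacobiLie

variable {n : ℕ} {s t : ℝ} {α β w η μ e : Fin n → ℝ}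

theorem isJacobiLieBialgebra_wedgeBracket (hβα : β ⬝ᵥ α = 0) (hηα : η ⬝ᵥ α = 0)
    (hβw : β ⬝ᵥ w = 0)
    (hone : (1 : Matrix (Fin n) (Fin n) ℝ) =
      (s + t) • vecMulVec η w + vecMulVec μ α + vecMulVec β e) :
    IsJacobiLieBialgebra n (wedgeBracket (s • β) η w) (wedgeBracket (t • α) w η) α β := by
  have hαβ : α ⬝ᵥ β = 0 := dotProduct_comm β α ▸ hβα
  have hαη : α ⬝ᵥ η = 0 := dotProduct_comm η α ▸ hηα
  have hαf (i m : Fin n) : ∑ k, α k * wedgeBracket (s • β) η w i k m = 0 := by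
    simp [sum_mul_wedgeBracket_middle, hαβ, hαη]
  refine ⟨wedgeBracket_antisymm _ _ _, wedgeBracket_jacobi' _ _ _, wedgeBracket_antisymm _ _ _,
    wedgeBracket_jacobi _ _ _, fun i j m p ↦ ?_, hαβ, fun i m ↦ ?_, fun m p ↦ ?_, fun m p ↦ ?_⟩
  · rw [wedgeBracket_cocycle]
    simp only [hαf]
    simp only [wedgeBracket, Pi.smul_apply, smul_eq_mul]
    linear_combination wedge_mul_wedge_of_one_eq hone i j m p
  · simp [sum_mul_wedgeBracket_left, hαβ, hαη, hβα, hβw]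
  · simp [sum_mul_wedgeBracket_right, hαη]
  · simp [sum_mul_wedgeBracket_right, hβw]

end JacobiLie

/-- the Jacobi-Lie bialgebra `((III, a X̃¹), (III.i, −(X₂−X₃)))` for `a ≠ 0`. -/
theorem stmt8 (a : ℝ) (ha : a ≠ 0) :
    IsJacobiLieBialgebra 3
      (![![![0, 0, 0], ![0, -1, -1], ![0, -1, -1]], ![![0, 1, 1], ![0, 0, 0], ![0, 0, 0]], ![![0, 1, 1], ![0, 0, 0], ![0, 0, 0]]] : Fin 3 → Fin 3 → Fin 3 → ℝ)
      (![![![0, 0, 0], ![0, 0, 0], ![0, 0, 0]], ![![0, 0, 0], ![0, 0, 0], ![0, -((a + 2) / a), -((a + 2) / a)]], ![![0, 0, 0], ![0, (a + 2) / a, (a + 2) / a], ![0, 0, 0]]] : Fin 3 → Fin 3 → Fin 3 → ℝ)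
      ![0, -1, 1] ![a, 0, 0] := by
  have hst : -a⁻¹ + (a + 2) / (2 * a) = 1 / 2 := by
    field_simp
    ring
  have hone : (1 : Matrix (Fin 3) (Fin 3) ℝ) =
      (-a⁻¹ + (a + 2) / (2 * a)) • vecMulVec ![0, 1, 1] ![0, 1, 1] +
        vecMulVec ![0, -1 / 2, 1 / 2] ![0, -1, 1] + vecMulVec ![a, 0, 0] ![a⁻¹, 0, 0] := by
    rw [hst]
    ext i j
    fin_cases i <;> fin_cases j <;> simp [ha] <;> norm_num
  convert isJacobiLieBialgebra_wedgeBracket (by simp) (by simp) (by simp) hone using 1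
  · ext i j k
    fin_cases i <;> fin_cases j <;> fin_cases k <;> simp [wedgeBracket, ha]
  · ext i j k
    fin_cases i <;> fin_cases j <;> fin_cases k <;> simp [wedgeBracket] <;> field_simp <;> ring
end
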